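/- arXiv:2604.22965 — 2 statements merged into one kernel-verified Lean document; each statement's English description precedes it below -/
import Mathlib

section
/- Fix c > 0 and μ ∈ ℝ with |μ| < c, and let Φ denote the cumulative distribution function of the standard Gaussian measure on ℝ. Then the function σ ↦ Φ((c − μ)/σ) − Φ(−(c + μ)/σ) is strictly decreasing on (0, ∞). -/
/-!
Since `Φ` is strictly increasing, both terms are strictly monotone in `σ`: as `|μ| < c`, both `c - μ`
and `c + μ` are positive, so increasing `σ` strictly lowers `(c - μ) / σ` and strictly raises
`-((c + μ) / σ)`. Strict monotonicity of `Φ` holds because Lebesgue measure is absolutely continuous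
with respect to the Gaussian measure, so every interval `(x, y]` with `x < y` has positive Gaussian
mass.
-/

open MeasureTheory ProbabilityTheory

/-- The cumulative distribution function of the standard Gaussian measure on ℝ. -/
noncomputable def stdNormalCdf (x : ℝ) : ℝ :=
  (gaussianReal 0 1 (Set.Iic x)).toReal

lemma stdNormalCdf_strictMono : StrictMono stdNormalCdf := by
  intro x y hxy
  have hpos : 0 < gaussianReal 0 1 (Set.Ioc x y) := by
    rw [pos_iff_ne_zero]
    intro h
    have hvol := gaussianReal_absolutelyContinuous' 0 (one_ne_zero) h
    rw [Real.volume_Ioc, ENNReal.ofReal_eq_zero] at hvol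
    linarith
  have hsplit : gaussianReal 0 1 (Set.Iic y)
      = gaussianReal 0 1 (Set.Iic x) + gaussianReal 0 1 (Set.Ioc x y) := by
    rw [← Set.Iic_union_Ioc_eq_Iic hxy.le]
    exact measure_union (Set.Iic_disjoint_Ioc le_rfl) measurableSet_Ioc
  unfold stdNormalCdf
  rw [hsplit, ENNReal.toReal_add (measure_ne_top _ _) (measure_ne_top _ _)]
  linarith [ENNReal.toReal_pos hpos.ne' (measure_ne_top (gaussianReal 0 1) (Set.Ioc x y))]

theorem probability_of_agreement_strictAnti_in_sigma
    (c μ : ℝ) (hc : 0 < c) (hμ : |μ| < c) :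
    StrictAntiOn (fun σ : ℝ => stdNormalCdf ((c - μ) / σ) - stdNormalCdf (-((c + μ) / σ)))
      (Set.Ioi (0 : ℝ)) := by
  intro s hs t _ hst
  obtain ⟨h1, h2⟩ := abs_lt.mp hμ
  exact sub_lt_sub
    (stdNormalCdf_strictMono (div_lt_div_of_pos_left (by linarith) hs hst))
    (stdNormalCdf_strictMono (neg_lt_neg (div_lt_div_of_pos_left (by linarith) hs hst)))
end

section
/- Let γ ∈ ℝ, τ > 0, C > 0, and let g : ℝ → [0,∞) be measurable with ∫_ℝ C g(r²) dr = 1 and r ↦ r g(r²) Lebesgue integrable on ℝ. Let D be a real random variable whose law has density d ↦ (C/τ) g(((d − γ)/τ)²) with respect to Lebesgue measure, and set α = γ/τ. Then E[|D|] = γ(1 − 2C ∫_{−∞}^{−α} g(r²) dr) − 2Cτ ∫_{−∞}^{−α} r g(r²) dr. -/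
/-!
Substituting `d = γ + τ r` turns `E|D|` into `∫ C g(r²) |γ + τ r| dr`. Since `γ + τ r ≤ 0` exactly
when `r ≤ -α`, one has `|γ + τ r| = (γ + τ r) - 2 (γ + τ r) 1_{r ≤ -α}`. The first part integrates
to `γ`, because `C g(r²)` has mass one and `r g(r²)` is odd; the second part gives the two
truncated integrals.
-/

open MeasureTheory

theorem abs_moment_location_scale_density
    (γ τ C : ℝ) (hτ : 0 < τ) (hC : 0 < C)
    (g : ℝ → ℝ) (hg_meas : Measurable g) (hg_nonneg : ∀ r, 0 ≤ g r)
    (hnorm : (∫ r : ℝ, C * g (r ^ 2)) = 1)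
    (hint : Integrable (fun r : ℝ => r * g (r ^ 2)))
    (ν : Measure ℝ)
    (hν : ν = volume.withDensity (fun d => ENNReal.ofReal ((C / τ) * g (((d - γ) / τ) ^ 2))))
    (α : ℝ) (hα : α = γ / τ) :
    (∫ d, |d| ∂ν)
      = γ * (1 - 2 * C * ∫ r in Set.Iic (-α), g (r ^ 2))
        - 2 * C * τ * ∫ r in Set.Iic (-α), r * g (r ^ 2) := by
  -- A non-integrable function would have Bochner integral `0`, contradicting `hnorm`.
  have hgC : Integrable (fun r : ℝ => C * g (r ^ 2)) :=
    Integrable.of_integral_ne_zero (by rw [hnorm]; exact one_ne_zero)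
  have hg : Integrable (fun r : ℝ => g (r ^ 2)) := by
    refine (hgC.const_mul C⁻¹).congr (ae_of_all _ fun r => ?_)
    simp only
    field_simp
  have hmass : C * ∫ r : ℝ, g (r ^ 2) = 1 := by rw [← integral_const_mul, hnorm]
  have hodd : ∫ r : ℝ, r * g (r ^ 2) = 0 := by
    have h := integral_neg_eq_self (fun r : ℝ => r * g (r ^ 2)) volume
    simp only [neg_sq, neg_mul, integral_neg] at h
    linarith
  have hsubst : ∫ d, |d| ∂ν = ∫ r : ℝ, C * g (r ^ 2) * |γ + τ * r| := by
    rw [hν, integral_withDensity_eq_integral_toReal_smul (by fun_prop)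
      (ae_of_all _ fun _ => ENNReal.ofReal_lt_top)]
    have h1 : ∀ d : ℝ, (ENNReal.ofReal ((C / τ) * g (((d - γ) / τ) ^ 2))).toReal • |d|
        = (fun r : ℝ => τ⁻¹ * (C * g (r ^ 2) * |γ + τ * r|)) ((d - γ) / τ) := by
      intro d
      have hd : γ + τ * ((d - γ) / τ) = d := by field_simp; ring
      rw [ENNReal.toReal_ofReal (mul_nonneg (by positivity) (hg_nonneg _)), smul_eq_mul]
      simp only [hd]
      ring
    simp_rw [h1]
    rw [integral_sub_right_eq_self
        (fun x => (fun r : ℝ => τ⁻¹ * (C * g (r ^ 2) * |γ + τ * r|)) (x / τ)) γ,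
      Measure.integral_comp_div (fun r : ℝ => τ⁻¹ * (C * g (r ^ 2) * |γ + τ * r|)) τ, abs_of_pos hτ, integral_const_mul, smul_eq_mul,
      mul_inv_cancel_left₀ hτ.ne']
  have hlin : Integrable (fun r : ℝ => C * γ * g (r ^ 2) + C * τ * (r * g (r ^ 2))) :=
    (hg.const_mul _).add (hint.const_mul _)
  have hsplit : ∀ r : ℝ, C * g (r ^ 2) * |γ + τ * r|
      = (C * γ * g (r ^ 2) + C * τ * (r * g (r ^ 2)))
        - 2 * (Set.Iic (-α)).indicator
          (fun r : ℝ => C * γ * g (r ^ 2) + C * τ * (r * g (r ^ 2))) r := by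
    intro r
    have hγ : γ = τ * α := by rw [hα]; field_simp
    by_cases hr : r ≤ -α
    · rw [Set.indicator_of_mem (Set.mem_Iic.2 hr), abs_of_nonpos (by rw [hγ]; nlinarith)]
      ring
    · rw [Set.indicator_of_notMem (by simpa using hr), abs_of_nonneg (by rw [hγ]; nlinarith)]
      ring
  rw [hsubst]
  simp_rw [hsplit]
  rw [integral_sub hlin ((hlin.indicator measurableSet_Iic).const_mul 2), integral_const_mul,
    integral_indicator measurableSet_Iic,
    integral_add (hg.const_mul _) (hint.const_mul _),
    integral_add (hg.const_mul _).integrableOn (hint.const_mul _).integrableOn]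
  simp only [integral_const_mul]
  rw [hodd]
  linear_combination γ * hmass
end
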